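/- (Non-cyclicity of type I symbols.) Let 0 < a < 1 and b ∈ ℂ with Re(b) > 0, and let φ(w) = a·w + b. Then for every f ∈ H²(ℂ₊), the linear span of the orbit {f ∘ φ^[n] : n ∈ ℕ} is not dense in H²(ℂ₊): there exist g ∈ H²(ℂ₊) and ε > 0 such that every finite linear combination h of the functions f ∘ φ^[n] satisfies ‖g − h‖ ≥ ε. That is, the composition operator C_φ is not cyclic on H²(ℂ₊). -/

import Mathlib

open Complex MeasureTheory

/-- The square of the `H²(ℂ₊)` norm: `sup_{x>0} ∫ |f(x+iy)|² dy`, valued in `ℝ≥0∞`. -/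
noncomputable def H2normSq (f : ℂ → ℂ) : ENNReal :=
  ⨆ x ∈ Set.Ioi (0 : ℝ), ∫⁻ y : ℝ, (‖f ((x : ℂ) + (y : ℂ) * Complex.I)‖₊ : ENNReal) ^ 2

/-- Membership in the Hardy space `H²(ℂ₊)` of the right half-plane. -/
def MemH2 (f : ℂ → ℂ) : Prop :=
  DifferentiableOn ℂ f {w : ℂ | 0 < w.re} ∧ H2normSq f < ⊤

/-!
Let `φ w = a w + b` with fixed point `p = b / (1 - a)`. Since `‖f w‖ ≤ ‖f‖ (Re w)^(-1/2)`, the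
Mellin transforms `Λ_s f = ∫₀^∞ u^(s-1) f (p + u) du` with `0 < Re s < 1/2` are bounded functionals
on `H²(ℂ₊)`, and `Λ_s (f ∘ φ) = a^(-s) Λ_s f` because `φ (p + u) = p + a u`. As `s ↦ a^(-s)` has
period `2πi / log a`, the adjoint of `C_φ` has two eigenvectors `Λ_s, Λ_t` with the same eigenvalue;
they are independent because they have distinct eigenvalues for the compositional square root of
`φ`, the homothety of ratio `√a` about `p`. Given `f`, some nontrivial combination of `Λ_s` and
`Λ_t` vanishes at `f`, hence on its orbit and on the closed span of that orbit.
-/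

section

open Set Filter
open scoped Real ENNReal

section SubMeanValue

theorem enorm_mul_two_pi_le_lintegral_circleMap {E : Type*} [NormedAddCommGroup E]
    [NormedSpace ℂ E] [CompleteSpace E] {f : ℂ → E} {c : ℂ} {r : ℝ}
    (hf : DiffContOnCl ℂ f (Metric.ball c |r|)) :
    ‖f c‖ₑ * ENNReal.ofReal (2 * π) ≤ ∫⁻ θ in Ioo (-π) π, ‖f (circleMap c r θ)‖ₑ := by
  have hper : Function.Periodic (fun θ => f (circleMap c r θ)) (2 * π) := fun θ => by
    simp only [periodic_circleMap c r θ]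
  have hint : ∫ θ in Ioo (-π) π, f (circleMap c r θ) = (2 * π) • f c := by
    have hshift := hper.intervalIntegral_add_eq 0 (-π)
    rw [zero_add, show -π + 2 * π = π by ring] at hshift
    rw [← integral_Ioc_eq_integral_Ioo,
      ← intervalIntegral.integral_of_le (by linarith [Real.pi_pos]), ← hshift, ← hf.circleAverage,
      Real.circleAverage_def, smul_inv_smul₀ Real.two_pi_pos.ne']
  calc ‖f c‖ₑ * ENNReal.ofReal (2 * π) = ‖∫ θ in Ioo (-π) π, f (circleMap c r θ)‖ₑ := by
        rw [hint, enorm_smul, Real.enorm_eq_ofReal Real.two_pi_pos.le, mul_comm]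
    _ ≤ _ := enorm_integral_le_lintegral_enorm _

theorem lintegral_ball_eq_polar {c : ℂ} {R : ℝ} {g : ℂ → ℝ≥0∞}
    (hg : ContinuousOn g (Metric.ball c R)) :
    ∫⁻ z in Metric.ball c R, g z =
      ∫⁻ r in Ioo 0 R, ENNReal.ofReal r * ∫⁻ θ in Ioo (-π) π, g (circleMap c r θ) := by
  set G : ℂ → ℝ≥0∞ := (Metric.ball c R).indicator g
  have hG : Measurable G := by
    classical
    rw [show G = _ from (Set.piecewise_eq_indicator).symm]
    exact hg.measurable_piecewise continuousOn_const Metric.isOpen_ball.measurableSet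
  have hpolar (r θ : ℝ) : c + Complex.polarCoord.symm (r, θ) = circleMap c r θ := by
    simp [circleMap, Complex.polarCoord_symm_apply, Complex.exp_mul_I]
  have hcircle {r : ℝ} (hr : 0 < r) (θ : ℝ) :
      G (circleMap c r θ) = (Iio R).indicator (fun r => g (circleMap c r θ)) r := by
    simp [G, indicator, circleMap, abs_of_pos hr]
  have hmeas : Measurable fun p : ℝ × ℝ => ENNReal.ofReal p.1 • G (circleMap c p.1 p.2) := by
    unfold circleMap
    fun_prop
  calc ∫⁻ z in Metric.ball c R, g z = ∫⁻ z, G (c + z) := by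
        rw [← lintegral_indicator Metric.isOpen_ball.measurableSet,
          lintegral_add_left_eq_self G c]
    _ = ∫⁻ r in Ioi 0, ∫⁻ θ in Ioo (-π) π, ENNReal.ofReal r • G (circleMap c r θ) := by
        simp_rw [← Complex.lintegral_comp_polarCoord_symm, polarCoord_target,
          Measure.volume_eq_prod, ← Measure.prod_restrict, hpolar]
        exact lintegral_prod _ hmeas.aemeasurable
    _ = ∫⁻ r in Ioi 0, (Iio R).indicator
          (fun r => ENNReal.ofReal r * ∫⁻ θ in Ioo (-π) π, g (circleMap c r θ)) r := by
        refine setLIntegral_congr_fun measurableSet_Ioi fun r hr => ?_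
        simp only [hcircle (mem_Ioi.1 hr), smul_eq_mul,
          lintegral_const_mul' _ _ ENNReal.ofReal_ne_top]
        by_cases hrR : r ∈ Iio R <;> simp [hrR]
    _ = _ := by
        rw [setLIntegral_indicator measurableSet_Iio, Iio_inter_Ioi]

theorem enorm_mul_volume_ball_le_lintegral {E : Type*} [NormedAddCommGroup E]
    [NormedSpace ℂ E] [CompleteSpace E] {f : ℂ → E} {c : ℂ} {R : ℝ}
    (hf : DifferentiableOn ℂ f (Metric.ball c R)) :
    ‖f c‖ₑ * volume (Metric.ball c R) ≤ ∫⁻ z in Metric.ball c R, ‖f z‖ₑ := by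
  have hcircle : ∀ r ∈ Ioo 0 R,
      ‖f c‖ₑ * ENNReal.ofReal (2 * π) ≤ ∫⁻ θ in Ioo (-π) π, ‖f (circleMap c r θ)‖ₑ := by
    intro r hr
    refine enorm_mul_two_pi_le_lintegral_circleMap (DifferentiableOn.diffContOnCl ?_)
    rw [abs_of_pos hr.1, closure_ball _ hr.1.ne']
    exact hf.mono (Metric.closedBall_subset_ball hr.2)
  calc ‖f c‖ₑ * volume (Metric.ball c R) = ∫⁻ _ in Metric.ball c R, ‖f c‖ₑ :=
        (setLIntegral_const _ _).symm
    _ = ∫⁻ r in Ioo 0 R, ENNReal.ofReal r * (‖f c‖ₑ * ENNReal.ofReal (2 * π)) := by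
        rw [lintegral_ball_eq_polar continuousOn_const]
        simp only [setLIntegral_const, Real.volume_Ioo, sub_neg_eq_add, ← two_mul]
    _ ≤ ∫⁻ r in Ioo 0 R, ENNReal.ofReal r * ∫⁻ θ in Ioo (-π) π, ‖f (circleMap c r θ)‖ₑ :=
        setLIntegral_mono' measurableSet_Ioo fun r hr => by gcongr; exact hcircle r hr
    _ = ∫⁻ z in Metric.ball c R, ‖f z‖ₑ :=
        (lintegral_ball_eq_polar hf.continuousOn.enorm).symm

end SubMeanValue

section MellinTransform

theorem integrableOn_rpow_mul_add_rpow {c r σ : ℝ} (hc : 0 < c) (hσ : σ ∈ Ioo 0 r) :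
    IntegrableOn (fun u => u ^ (σ - 1) * (u + c) ^ (-r)) (Ioi 0) := by
  have hr : 0 ≤ r := (hσ.1.trans hσ.2).le
  have hcont : ContinuousOn (fun u : ℝ => (u + c) ^ (-r)) (Ici 0) := by
    refine ContinuousOn.rpow_const (by fun_prop) fun u hu => Or.inl ?_
    exact (add_pos_of_nonneg_of_pos hu hc).ne'
  refine mellin_convergent_of_isBigO_scalar (a := r) (b := 0)
    ((hcont.mono Ioi_subset_Ici_self).locallyIntegrableOn measurableSet_Ioi) ?_ hσ.2 ?_ hσ.1
  · refine Asymptotics.IsBigO.of_bound' ?_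
    filter_upwards [eventually_gt_atTop 0] with u hu
    rw [Real.norm_of_nonneg (by positivity), Real.norm_of_nonneg (by positivity)]
    exact Real.rpow_le_rpow_of_nonpos hu (by linarith) (neg_nonpos.2 hr)
  · simp only [neg_zero, Real.rpow_zero]
    exact ((hcont 0 self_mem_Ici).mono Ioi_subset_Ici_self).norm.isBoundedUnder_le.isBigO_one ℝ

theorem integrable_cpow_mul_exp_neg_add_mul {c : ℝ} (hc : 0 < c) {s : ℂ} (hs : s.re ∈ Ioo 0 1) :
    Integrable (fun q : ℝ × ℝ => (q.1 : ℂ) ^ (s - 1) * exp (-((q.1 + c : ℝ) * q.2)))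
      ((volume.restrict (Ioi 0)).prod (volume.restrict (Ioi 0))) := by
  have hmeas : Measurable fun q : ℝ × ℝ => (q.1 : ℂ) ^ (s - 1) * exp (-((q.1 + c : ℝ) * q.2)) := by
    fun_prop
  have hnorm {u : ℝ} (hu : 0 < u) (x : ℝ) :
      ‖(u : ℂ) ^ (s - 1) * exp (-((u + c : ℝ) * x))‖ =
        u ^ (s.re - 1) * Real.exp (-(u + c) * x) := by
    rw [norm_mul, norm_cpow_eq_rpow_re_of_pos hu, norm_exp]
    simp [-neg_add_rev]
  refine (integrable_prod_iff hmeas.aestronglyMeasurable).2 ⟨?_, ?_⟩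
  · filter_upwards [ae_restrict_mem measurableSet_Ioi] with u hu
    have huc : -(u + c) < 0 := neg_neg_of_pos (add_pos hu hc)
    have hexp : IntegrableOn (fun x => Real.exp (-(u + c) * x)) (Ioi 0) :=
      integrableOn_exp_mul_Ioi huc 0
    refine Integrable.mono' (hexp.const_mul (u ^ (s.re - 1)))
      (hmeas.comp measurable_prodMk_left).aestronglyMeasurable (.of_forall fun x => ?_)
    exact (hnorm hu x).le
  · refine (integrableOn_rpow_mul_add_rpow hc hs).congr_fun (fun u hu => ?_) measurableSet_Ioi
    have huc : -(u + c) < 0 := neg_neg_of_pos (add_pos hu hc)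
    simp only [hnorm hu, integral_const_mul, integral_exp_mul_Ioi huc, mul_zero, Real.exp_zero,
      neg_div_neg_eq, one_div, Real.rpow_neg_one]

theorem mellin_add_inv {c : ℝ} (hc : 0 < c) {s : ℂ} (hs : s.re ∈ Ioo 0 1) :
    mellin (fun u : ℝ => ((u + c : ℝ) : ℂ)⁻¹) s =
      Gamma s * Gamma (1 - s) * (1 / c) ^ (1 - s) := by
  have hs' : 0 < (1 - s).re := by simpa using hs.2
  calc mellin (fun u : ℝ => ((u + c : ℝ) : ℂ)⁻¹) s
      = ∫ u : ℝ in Ioi 0, ∫ x : ℝ in Ioi 0, (u : ℂ) ^ (s - 1) * exp (-((u + c : ℝ) * x)) := by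
        refine setIntegral_congr_fun measurableSet_Ioi fun u hu => ?_
        have huc : 0 < u + c := add_pos hu hc
        have hexp := integral_cpow_mul_exp_neg_mul_Ioi (a := 1) (by simp) huc
        simp only [sub_self, cpow_zero, one_mul, cpow_one, Gamma_one, mul_one] at hexp
        simp only [integral_const_mul, hexp, smul_eq_mul, one_div]
    _ = ∫ x : ℝ in Ioi 0, ∫ u : ℝ in Ioi 0, (u : ℂ) ^ (s - 1) * exp (-((u + c : ℝ) * x)) :=
        integral_integral_swap (integrable_cpow_mul_exp_neg_add_mul hc hs)
    _ = ∫ x : ℝ in Ioi 0, Gamma s * ((x : ℂ) ^ (1 - s - 1) * exp (-(c * x))) := by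
        refine setIntegral_congr_fun measurableSet_Ioi fun x hx => ?_
        have hsplit (u : ℝ) : (u : ℂ) ^ (s - 1) * exp (-((u + c : ℝ) * x)) =
            (u : ℂ) ^ (s - 1) * exp (-(x * u)) * exp (-(c * x)) := by
          rw [mul_assoc, ← exp_add]
          push_cast
          ring_nf
        have harg : arg (x : ℂ) ≠ π := by
          rw [arg_ofReal_of_nonneg (le_of_lt hx)]
          exact Real.pi_ne_zero.symm
        have hpow : (1 / x : ℂ) ^ s = (x : ℂ) ^ (1 - s - 1) := by
          rw [one_div, inv_cpow _ _ harg, ← cpow_neg, sub_sub_cancel_left]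
        simp only [hsplit, integral_mul_const, integral_cpow_mul_exp_neg_mul_Ioi hs.1 hx, hpow]
        ring
    _ = Gamma s * Gamma (1 - s) * (1 / c) ^ (1 - s) := by
        rw [integral_const_mul, integral_cpow_mul_exp_neg_mul_Ioi hs' hc, mul_assoc,
          mul_comm (Gamma (1 - s))]

theorem mellin_add_inv_ne_zero {c : ℝ} (hc : 0 < c) {s : ℂ} (hs : s.re ∈ Ioo 0 1) :
    mellin (fun u : ℝ => ((u + c : ℝ) : ℂ)⁻¹) s ≠ 0 := by
  have hs' : 0 < (1 - s).re := by simpa using hs.2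
  rw [mellin_add_inv hc hs]
  have hpow : (1 / c : ℂ) ^ (1 - s) ≠ 0 :=
    cpow_ne_zero_iff.2 (Or.inl (one_div_ne_zero (ofReal_ne_zero.2 hc.ne')))
  exact mul_ne_zero
    (mul_ne_zero (Gamma_ne_zero_of_re_pos hs.1) (Gamma_ne_zero_of_re_pos hs')) hpow

theorem exists_cpow_neg_eq_and_sqrt_cpow_neg_ne {a : ℝ} (ha : a ∈ Ioo 0 1) : ∃ s t : ℂ,
    s.re ∈ Ioo 0 (1 / 2) ∧ t.re ∈ Ioo 0 (1 / 2) ∧ (a : ℂ) ^ (-s) = (a : ℂ) ^ (-t) ∧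
      (√a : ℂ) ^ (-s) ≠ (√a : ℂ) ^ (-t) := by
  have ha₀ : (a : ℂ) ≠ 0 := ofReal_ne_zero.2 ha.1.ne'
  have hsqrt₀ : (√a : ℂ) ≠ 0 := ofReal_ne_zero.2 (Real.sqrt_pos.2 ha.1).ne'
  have hlog : (Real.log a : ℂ) ≠ 0 := ofReal_ne_zero.2 (Real.log_neg ha.1 ha.2).ne
  set ω : ℂ := (2 * π / Real.log a : ℝ) * I with hω
  have hperiod : (a : ℂ) ^ (-ω) = 1 := by
    rw [cpow_def_of_ne_zero ha₀, ← ofReal_log ha.1.le, exp_eq_one_iff]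
    refine ⟨-1, ?_⟩
    rw [hω]
    push_cast
    field_simp
  have hhalf : (√a : ℂ) ^ (-ω) = -1 := by
    rw [cpow_def_of_ne_zero hsqrt₀, ← ofReal_log (Real.sqrt_nonneg a), Real.log_sqrt ha.1.le,
      ← exp_neg_pi_mul_I]
    congr 1
    rw [hω]
    push_cast
    field_simp
  refine ⟨(1 / 4 : ℝ), (1 / 4 : ℝ) + ω, ?_, ?_, ?_, ?_⟩
  · norm_num [ofReal_re]
  · rw [add_re, ofReal_re, hω, re_ofReal_mul, I_re]
    norm_num
  · rw [neg_add, cpow_add _ _ ha₀, hperiod, mul_one]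
  · rw [neg_add, cpow_add _ _ hsqrt₀, hhalf, mul_neg_one]
    exact self_ne_neg.2 (cpow_ne_zero_iff.2 (Or.inl hsqrt₀))

end MellinTransform

section Orbit

variable {𝕜 E : Type*} [Field 𝕜] [TopologicalSpace 𝕜] [T1Space 𝕜] [AddCommGroup E] [Module 𝕜 E]
  [TopologicalSpace E] {T : Module.End 𝕜 E} {μ : 𝕜}

theorem not_dense_span_orbit_of_apply_eq_zero {Λ : Module.Dual 𝕜 E} (hcont : Continuous Λ)
    (hΛ : Module.End.HasEigenvector T.dualMap μ Λ) {x : E} (hx : Λ x = 0) :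
    ¬ Dense (Submodule.span 𝕜 (range fun n : ℕ => (T ^ n) x) : Set E) := by
  have horbit (n : ℕ) : Λ ((T ^ n) x) = 0 := by
    induction n with
    | zero => simpa using hx
    | succ n ih =>
      have heig := LinearMap.congr_fun hΛ.apply_eq_smul ((T ^ n) x)
      rw [pow_succ', Module.End.mul_apply]
      simpa [ih] using heig
  intro hdense
  have hker : Submodule.span 𝕜 (range fun n : ℕ => (T ^ n) x) ≤ LinearMap.ker Λ :=
    Submodule.span_le.2 (range_subset_iff.2 horbit)
  have hclosed : IsClosed (LinearMap.ker Λ : Set E) := isClosed_singleton.preimage hcont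
  exact hΛ.2 (LinearMap.ker_eq_top.1 (SetLike.coe_injective
    (hclosed.closure_eq.symm.trans (hdense.mono hker).closure_eq)))

theorem not_dense_span_orbit [IsTopologicalRing 𝕜] {Λ₁ Λ₂ : Module.Dual 𝕜 E}
    (hcont₁ : Continuous Λ₁) (hcont₂ : Continuous Λ₂)
    (hΛ₁ : Module.End.HasEigenvector T.dualMap μ Λ₁)
    (hΛ₂ : Module.End.HasEigenvector T.dualMap μ Λ₂)
    (hindep : LinearIndependent 𝕜 ![Λ₁, Λ₂]) (x : E) :
    ¬ Dense (Submodule.span 𝕜 (range fun n : ℕ => (T ^ n) x) : Set E) := by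
  by_cases hx : Λ₂ x = 0
  · exact not_dense_span_orbit_of_apply_eq_zero hcont₂ hΛ₂ hx
  · refine not_dense_span_orbit_of_apply_eq_zero (Λ := Λ₂ x • Λ₁ + (-Λ₁ x) • Λ₂)
      ((hcont₁.const_mul (Λ₂ x)).add (hcont₂.const_mul (-Λ₁ x)))
      ⟨add_mem (Submodule.smul_mem _ _ hΛ₁.1) (Submodule.smul_mem _ _ hΛ₂.1), fun hzero => ?_⟩
      (by simp [mul_comm])
    exact hx (LinearIndependent.pair_iff.1 hindep _ _ hzero).1

end Orbit

section Growth

theorem lintegral_complex_le (g : ℂ → ℝ≥0∞) :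
    ∫⁻ z, g z ≤ ∫⁻ x : ℝ, ∫⁻ y : ℝ, g (x + y * I) := by
  rw [← Complex.volume_preserving_equiv_real_prod.symm.lintegral_comp_emb
    Complex.measurableEquivRealProd.symm.measurableEmbedding, Measure.volume_eq_prod]
  refine (lintegral_prod_le _).trans_eq ?_
  simp [mk_eq_add_mul_I]

theorem lintegral_vertical_le_H2normSq (f : ℂ → ℂ) {x : ℝ} (hx : 0 < x) :
    ∫⁻ y : ℝ, ‖f (x + y * I)‖ₑ ^ 2 ≤ H2normSq f :=
  le_iSup₂_of_le x hx le_rfl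

theorem ball_subset_re_preimage_Ioo (w : ℂ) (R : ℝ) :
    Metric.ball w R ⊆ re ⁻¹' Ioo (w.re - R) (w.re + R) := fun z hz => by
  have h := abs_lt.1 ((abs_re_le_norm (z - w)).trans_lt (mem_ball_iff_norm.1 hz))
  rw [sub_re] at h
  exact ⟨by linarith [h.1], by linarith [h.2]⟩

theorem setLIntegral_strip_le (f : ℂ → ℂ) {α β : ℝ} (hα : 0 ≤ α) :
    ∫⁻ z in re ⁻¹' Ioo α β, ‖f z‖ₑ ^ 2 ≤ ENNReal.ofReal (β - α) * H2normSq f := by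
  calc ∫⁻ z in re ⁻¹' Ioo α β, ‖f z‖ₑ ^ 2
      ≤ ∫⁻ x : ℝ, ∫⁻ y : ℝ, (re ⁻¹' Ioo α β).indicator (fun z => ‖f z‖ₑ ^ 2) (x + y * I) := by
        rw [← lintegral_indicator (measurable_re measurableSet_Ioo)]
        exact lintegral_complex_le _
    _ = ∫⁻ x in Ioo α β, ∫⁻ y : ℝ, ‖f (x + y * I)‖ₑ ^ 2 := by
        rw [← lintegral_indicator measurableSet_Ioo]
        refine lintegral_congr fun x => ?_
        by_cases hx : x ∈ Ioo α β <;> simp [indicator, hx]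
    _ ≤ ∫⁻ _ in Ioo α β, H2normSq f :=
        setLIntegral_mono' measurableSet_Ioo fun x hx =>
          lintegral_vertical_le_H2normSq f (hα.trans_lt hx.1)
    _ = ENNReal.ofReal (β - α) * H2normSq f := by
        rw [setLIntegral_const, Real.volume_Ioo, mul_comm]

theorem enorm_sq_mul_re_le_H2normSq {f : ℂ → ℂ} (hf : DifferentiableOn ℂ f {w : ℂ | 0 < w.re})
    {w : ℂ} (hw : 0 < w.re) : ‖f w‖ₑ ^ 2 * ENNReal.ofReal w.re ≤ H2normSq f := by
  have hball := ball_subset_re_preimage_Ioo w w.re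
  have hd : DifferentiableOn ℂ (fun z => f z ^ 2) (Metric.ball w w.re) :=
    (hf.mono fun z hz => by simpa using (hball hz).1).pow 2
  have harea : ‖f w‖ₑ ^ 2 * volume (Metric.ball w w.re) ≤
      ENNReal.ofReal (2 * w.re) * H2normSq f := by
    calc ‖f w‖ₑ ^ 2 * volume (Metric.ball w w.re)
        ≤ ∫⁻ z in Metric.ball w w.re, ‖f z‖ₑ ^ 2 := by
          simpa only [enorm_pow] using enorm_mul_volume_ball_le_lintegral hd
      _ ≤ ∫⁻ z in re ⁻¹' Ioo (w.re - w.re) (w.re + w.re), ‖f z‖ₑ ^ 2 := lintegral_mono_set hball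
      _ ≤ ENNReal.ofReal (2 * w.re) * H2normSq f := by
          convert setLIntegral_strip_le f (sub_self w.re).ge using 3
          ring
  have hvol : ENNReal.ofReal (2 * w.re) * ENNReal.ofReal w.re ≤ volume (Metric.ball w w.re) := by
    rw [Complex.volume_ball, ENNReal.ofReal_mul two_pos.le, mul_assoc, ← sq, mul_comm]
    gcongr
    exact_mod_cast Real.two_le_pi
  have hpos : ENNReal.ofReal (2 * w.re) ≠ 0 := by simpa using hw
  refine (ENNReal.mul_le_mul_iff_right hpos ENNReal.ofReal_ne_top).1 ?_
  calc ENNReal.ofReal (2 * w.re) * (‖f w‖ₑ ^ 2 * ENNReal.ofReal w.re)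
      = ‖f w‖ₑ ^ 2 * (ENNReal.ofReal (2 * w.re) * ENNReal.ofReal w.re) := by ring
    _ ≤ ‖f w‖ₑ ^ 2 * volume (Metric.ball w w.re) := by gcongr
    _ ≤ ENNReal.ofReal (2 * w.re) * H2normSq f := harea

end Growth

section Norm

/-- The extended-real-valued norm of `H²(ℂ₊)`, whose square is `H2normSq`. -/
noncomputable def H2norm (f : ℂ → ℂ) : ℝ≥0∞ :=
  ⨆ x ∈ Ioi (0 : ℝ), eLpNorm (fun y : ℝ => f (x + y * I)) 2 volume

theorem eLpNorm_vertical_le_H2norm (f : ℂ → ℂ) {x : ℝ} (hx : 0 < x) :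
    eLpNorm (fun y : ℝ => f (x + y * I)) 2 volume ≤ H2norm f :=
  le_biSup (fun x : ℝ => eLpNorm (fun y : ℝ => f (x + y * I)) 2 volume) (mem_Ioi.2 hx)

theorem H2norm_sq (f : ℂ → ℂ) : H2norm f ^ 2 = H2normSq f := by
  simp only [H2norm, H2normSq, ENNReal.iSup₂_pow_of_ne_zero _ two_ne_zero]
  refine iSup_congr fun x => iSup_congr fun _ => ?_
  simpa [enorm_eq_nnnorm] using eLpNorm_nnreal_pow_eq_lintegral (p := 2) (μ := volume)
    (f := fun y : ℝ => f (x + y * I)) two_ne_zero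

theorem H2norm_lt_top_iff {f : ℂ → ℂ} : H2norm f < ⊤ ↔ H2normSq f < ⊤ := by
  simp [← H2norm_sq, ENNReal.pow_lt_top_iff]

theorem H2norm_const_smul (c : ℂ) (f : ℂ → ℂ) : H2norm (c • f) = ‖c‖ₑ * H2norm f := by
  simp only [H2norm, ENNReal.mul_iSup]
  exact iSup_congr fun x => iSup_congr fun _ =>
    eLpNorm_const_smul c (fun y : ℝ => f (x + y * I)) 2 volume

theorem continuous_vertical {f : ℂ → ℂ}
    (hf : DifferentiableOn ℂ f {w : ℂ | 0 < w.re}) {x : ℝ} (hx : 0 < x) :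
    Continuous fun y : ℝ => f (x + y * I) :=
  hf.continuousOn.comp_continuous (by fun_prop) fun y => by simpa using hx

theorem H2norm_add_le {f g : ℂ → ℂ} (hf : DifferentiableOn ℂ f {w : ℂ | 0 < w.re})
    (hg : DifferentiableOn ℂ g {w : ℂ | 0 < w.re}) :
    H2norm (f + g) ≤ H2norm f + H2norm g := by
  refine iSup₂_le fun x hx => ?_
  exact (eLpNorm_add_le (continuous_vertical hf hx).aestronglyMeasurable
    (continuous_vertical hg hx).aestronglyMeasurable one_le_two).trans
    (add_le_add (eLpNorm_vertical_le_H2norm f hx) (eLpNorm_vertical_le_H2norm g hx))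

/-- `H²(ℂ₊)` as a subspace of all functions `ℂ → ℂ`. -/
def hardySubmodule : Submodule ℂ (ℂ → ℂ) where
  carrier := {f | MemH2 f}
  zero_mem' := ⟨differentiableOn_const 0, by simp [H2normSq]⟩
  add_mem' {f g} hf hg := ⟨hf.1.add hg.1, H2norm_lt_top_iff.1 <|
    (H2norm_add_le hf.1 hg.1).trans_lt <|
      ENNReal.add_lt_top.2 ⟨H2norm_lt_top_iff.2 hf.2, H2norm_lt_top_iff.2 hg.2⟩⟩
  smul_mem' c f hf := ⟨hf.1.const_smul c, H2norm_lt_top_iff.1 <| by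
    rw [H2norm_const_smul]
    exact ENNReal.mul_lt_top enorm_lt_top (H2norm_lt_top_iff.2 hf.2)⟩

/-- The Hardy space `H²(ℂ₊)` with its norm topology. A type synonym, because `hardySubmodule`
inherits the topology of pointwise convergence from `ℂ → ℂ`. The norm is only a seminorm: values
off the right half-plane are unconstrained. -/
def HardySpace : Type := hardySubmodule

namespace HardySpace

instance : AddCommGroup HardySpace := inferInstanceAs (AddCommGroup hardySubmodule)

instance : Module ℂ HardySpace := inferInstanceAs (Module ℂ hardySubmodule)

instance : CoeFun HardySpace fun _ => ℂ → ℂ := ⟨fun f => f.1⟩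

noncomputable instance : Norm HardySpace := ⟨fun f => (H2norm f).toReal⟩

/-- The inclusion of `H²(ℂ₊)` into the space of all functions. -/
def toFunLinear : HardySpace →ₗ[ℂ] ℂ → ℂ := hardySubmodule.subtype

theorem ofReal_norm_eq (f : HardySpace) : ENNReal.ofReal ‖f‖ = H2norm f :=
  ENNReal.ofReal_toReal (H2norm_lt_top_iff.2 f.2.2).ne

theorem seminormedSpaceCore : SeminormedSpace.Core ℂ HardySpace where
  norm_nonneg _ := ENNReal.toReal_nonneg
  norm_smul c f := by
    change (H2norm (c • f.1)).toReal = ‖c‖ * (H2norm f.1).toReal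
    simp [H2norm_const_smul]
  norm_triangle f g := by
    have hf := (H2norm_lt_top_iff.2 f.2.2).ne
    have hg := (H2norm_lt_top_iff.2 g.2.2).ne
    exact (ENNReal.toReal_mono (ENNReal.add_ne_top.2 ⟨hf, hg⟩)
      (H2norm_add_le f.2.1 g.2.1)).trans_eq (ENNReal.toReal_add hf hg)

noncomputable instance : SeminormedAddCommGroup HardySpace :=
  SeminormedAddCommGroup.ofCore seminormedSpaceCore

noncomputable instance : NormedSpace ℂ HardySpace where
  norm_smul_le c f := (seminormedSpaceCore.norm_smul c f).le

theorem norm_apply_le (f : HardySpace) {w : ℂ} (hw : 0 < w.re) :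
    ‖f w‖ ≤ ‖f‖ * w.re ^ (-(1 / 2) : ℝ) := by
  have hsq : ‖f w‖ ^ 2 * w.re ≤ ‖f‖ ^ 2 := by
    have hgrowth := enorm_sq_mul_re_le_H2normSq f.2.1 hw
    rwa [← H2norm_sq, ← ofReal_norm_eq, ← ofReal_norm, ← ENNReal.ofReal_pow (norm_nonneg _),
      ← ENNReal.ofReal_pow (norm_nonneg _), ← ENNReal.ofReal_mul (by positivity),
      ENNReal.ofReal_le_ofReal_iff (by positivity)] at hgrowth
  rw [Real.rpow_neg hw.le, ← Real.sqrt_eq_rpow, ← div_eq_mul_inv, le_div_iff₀ (by positivity)]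
  refine (sq_le_sq₀ (by positivity) (by positivity)).1 ?_
  rwa [mul_pow, Real.sq_sqrt hw.le]

end HardySpace

end Norm

section Composition

theorem lintegral_comp_mul_add (g : ℝ → ℝ≥0∞) {a : ℝ} (ha : a ≠ 0) (c : ℝ) :
    ∫⁻ y, g (a * y + c) = ENNReal.ofReal |a⁻¹| * ∫⁻ y, g y := by
  calc ∫⁻ y, g (a * y + c) = ∫⁻ y, g (y + c) ∂(volume.map (a * ·)) :=
        (lintegral_map_equiv (fun y => g (y + c)) (Homeomorph.mulLeft₀ a ha).toMeasurableEquiv).symm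
    _ = ENNReal.ofReal |a⁻¹| * ∫⁻ y, g y := by
        rw [Real.map_volume_mul_left ha, lintegral_smul_measure, smul_eq_mul,
          lintegral_add_right_eq_self]

theorem H2normSq_comp_affine_le (f : ℂ → ℂ) {a : ℝ} (ha : 0 < a) {b : ℂ} (hb : 0 ≤ b.re) :
    H2normSq (fun w => f (a * w + b)) ≤ ENNReal.ofReal a⁻¹ * H2normSq f := by
  refine iSup₂_le fun x hx => ?_
  have hx' : 0 < a * x + b.re := add_pos_of_pos_of_nonneg (mul_pos ha hx) hb
  calc ∫⁻ y : ℝ, ‖f (a * (x + y * I) + b)‖ₑ ^ 2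
      = ∫⁻ y : ℝ, ‖f (↑(a * x + b.re) + ↑(a * y + b.im) * I)‖ₑ ^ 2 := by
        refine lintegral_congr fun y => ?_
        congr 3
        apply Complex.ext <;> simp
    _ = ENNReal.ofReal a⁻¹ * ∫⁻ y : ℝ, ‖f (↑(a * x + b.re) + y * I)‖ₑ ^ 2 := by
        rw [lintegral_comp_mul_add (fun y : ℝ => ‖f (↑(a * x + b.re) + y * I)‖ₑ ^ 2) ha.ne',
          abs_of_pos (inv_pos.2 ha)]
    _ ≤ ENNReal.ofReal a⁻¹ * H2normSq f := by
        gcongr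
        exact lintegral_vertical_le_H2normSq f hx'

theorem memH2_comp_affine {f : ℂ → ℂ} (hf : MemH2 f) {a : ℝ} (ha : 0 < a) {b : ℂ}
    (hb : 0 ≤ b.re) : MemH2 fun w => f (a * w + b) := by
  refine ⟨hf.1.comp (by fun_prop) fun w hw => ?_,
    (H2normSq_comp_affine_le f ha hb).trans_lt (ENNReal.mul_lt_top ENNReal.ofReal_lt_top hf.2)⟩
  have hw' : 0 < a * w.re + b.re := add_pos_of_pos_of_nonneg (mul_pos ha hw) hb
  simpa using hw'

namespace HardySpace

/-- The composition operator on `H²(ℂ₊)` whose symbol `w ↦ a w + b` maps `ℂ₊` into itself. -/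
def compAffine {a : ℝ} (ha : 0 < a) {b : ℂ} (hb : 0 ≤ b.re) : Module.End ℂ HardySpace where
  toFun f := ⟨fun w => f (a * w + b), memH2_comp_affine f.2 ha hb⟩
  map_add' _ _ := rfl
  map_smul' _ _ := rfl

theorem toFunLinear_compAffine_pow {a : ℝ} (ha : 0 < a) {b : ℂ} (hb : 0 ≤ b.re) (n : ℕ)
    (f : HardySpace) :
    toFunLinear ((compAffine ha hb ^ n) f) = f ∘ (fun w : ℂ => a * w + b)^[n] := by
  induction n with
  | zero => rfl
  | succ n ih =>
    rw [pow_succ', Module.End.mul_apply, Function.iterate_succ, ← Function.comp_assoc, ← ih]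
    rfl

theorem map_toFunLinear_span_orbit {a : ℝ} (ha : 0 < a) {b : ℂ} (hb : 0 ≤ b.re)
    (f : HardySpace) :
    (Submodule.span ℂ (range fun n : ℕ => (compAffine ha hb ^ n) f)).map toFunLinear =
      Submodule.span ℂ (range fun n : ℕ => f ∘ (fun w : ℂ => a * w + b)^[n]) := by
  rw [Submodule.map_span, ← range_comp]
  exact congrArg (Submodule.span ℂ ∘ range) <| funext (toFunLinear_compAffine_pow ha hb · f)

end HardySpace

end Composition

section RayMellin

theorem integrable_inv_sq_add_sq {c : ℝ} (hc : c ≠ 0) (y₀ : ℝ) :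
    Integrable fun y : ℝ => (c ^ 2 + (y + y₀) ^ 2)⁻¹ := by
  refine (((integrable_inv_one_add_sq.comp_div hc).comp_add_right y₀).const_mul (c ^ 2)⁻¹).congr
    (.of_forall fun y => ?_)
  simp only [← mul_inv]
  field_simp

theorem memH2_szegoKernel {q : ℂ} (hq : 0 < q.re) : MemH2 fun w => (w + q)⁻¹ := by
  refine ⟨DifferentiableOn.fun_inv (by fun_prop) fun w hw h => ?_, lt_of_le_of_lt
    (iSup₂_le fun x hx => ?_) (integrable_inv_sq_add_sq hq.ne' q.im).lintegral_lt_top⟩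
  · have hre : 0 < (w + q).re := add_pos hw hq
    simp [h] at hre
  · refine lintegral_mono fun y => ?_
    have hle : q.re ^ 2 + (y + q.im) ^ 2 ≤ ‖x + y * I + q‖ ^ 2 := by
      have hx : (0 : ℝ) < x := hx
      rw [Complex.sq_norm, normSq_apply]
      simp only [add_re, add_im, ofReal_re, ofReal_im, mul_re, mul_im, I_re, I_im]
      nlinarith
    rw [← enorm_eq_nnnorm, ← ofReal_norm, ← ENNReal.ofReal_pow (norm_nonneg _), norm_inv, inv_pow]
    gcongr

namespace HardySpace

variable {p s : ℂ}

theorem norm_mellin_integrand_le (f : HardySpace) (hp : 0 < p.re) {u : ℝ} (hu : 0 < u) :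
    ‖(u : ℂ) ^ (s - 1) • f (p + u)‖ ≤
      ‖f‖ * (u ^ (s.re - 1) * (u + p.re) ^ (-(1 / 2) : ℝ)) := by
  have hpu : (p + u).re = u + p.re := by simp [add_comm]
  have hf := norm_apply_le f (w := p + u) (by rw [hpu]; positivity)
  rw [norm_smul, norm_cpow_eq_rpow_re_of_pos hu, sub_re, one_re, mul_left_comm]
  rw [hpu] at hf
  gcongr

theorem mellinConvergent_ray (f : HardySpace) (hp : 0 < p.re) (hs : s.re ∈ Ioo 0 (1 / 2)) :
    MellinConvergent (fun u : ℝ => f (p + u)) s := by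
  have hpow : ContinuousOn (fun u : ℝ => (u : ℂ) ^ (s - 1)) (Ioi 0) := fun u hu =>
    (continuousAt_ofReal_cpow_const u (s - 1) (Or.inr (ne_of_gt hu))).continuousWithinAt
  have hray : ContinuousOn (fun u : ℝ => f (p + u)) (Ioi 0) := by
    refine f.2.1.continuousOn.comp (f := fun u : ℝ => p + u) (by fun_prop) fun u hu => ?_
    have hpu : 0 < p.re + u := add_pos hp hu
    simpa using hpu
  refine Integrable.mono' ((integrableOn_rpow_mul_add_rpow hp hs).const_mul ‖f‖)
    ((hpow.smul hray).aestronglyMeasurable measurableSet_Ioi) ?_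
  filter_upwards [ae_restrict_mem measurableSet_Ioi] with u hu
  exact norm_mellin_integrand_le f hp hu

/-- The Mellin transform at `s` along the horizontal ray issuing from `p`, as a linear functional
on `H²(ℂ₊)`. -/
noncomputable def rayMellin (hp : 0 < p.re) (hs : s.re ∈ Ioo 0 (1 / 2)) :
    Module.Dual ℂ HardySpace where
  toFun f := mellin (fun u : ℝ => f (p + u)) s
  map_add' f g :=
    (hasMellin_add (mellinConvergent_ray f hp hs) (mellinConvergent_ray g hp hs)).2
  map_smul' c f := mellin_const_smul (fun u : ℝ => f (p + u)) s c

theorem continuous_rayMellin (hp : 0 < p.re) (hs : s.re ∈ Ioo 0 (1 / 2)) :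
    Continuous (rayMellin hp hs) := by
  refine AddMonoidHomClass.continuous_of_bound (rayMellin hp hs)
    (∫ u in Ioi 0, u ^ (s.re - 1) * (u + p.re) ^ (-(1 / 2) : ℝ)) fun f => ?_
  rw [mul_comm, ← integral_const_mul]
  refine norm_integral_le_of_norm_le
    ((integrableOn_rpow_mul_add_rpow hp hs).const_mul ‖f‖) ?_
  filter_upwards [ae_restrict_mem measurableSet_Ioi] with u hu
  exact norm_mellin_integrand_le f hp hu

theorem rayMellin_compAffine (hp : 0 < p.re) (hs : s.re ∈ Ioo 0 (1 / 2)) {a : ℝ} (ha : 0 < a)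
    {b : ℂ} (hb : 0 ≤ b.re) (hfix : a * p + b = p) (f : HardySpace) :
    rayMellin hp hs (compAffine ha hb f) = (a : ℂ) ^ (-s) * rayMellin hp hs f := by
  have hray (u : ℝ) : f (a * (p + u) + b) = f (p + (a * u : ℝ)) := by
    congrm f ?_
    push_cast
    linear_combination hfix
  calc rayMellin hp hs (compAffine ha hb f)
      = mellin (fun u : ℝ => f (p + (a * u : ℝ))) s := by
        simp_rw [← hray]
        rfl
    _ = (a : ℂ) ^ (-s) * rayMellin hp hs f :=
        mellin_comp_mul_left (fun u : ℝ => f (p + u)) s ha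

theorem rayMellin_ne_zero (hp : 0 < p.re) (hs : s.re ∈ Ioo 0 (1 / 2)) : rayMellin hp hs ≠ 0 := by
  intro hzero
  have hkernel (u : ℝ) : ((u + 2 * p.re : ℝ) : ℂ)⁻¹ = (p + u + starRingEnd ℂ p)⁻¹ := by
    rw [add_right_comm, add_conj]
    push_cast
    ring
  refine mellin_add_inv_ne_zero (mul_pos two_pos hp) ⟨hs.1, hs.2.trans one_half_lt_one⟩ ?_
  simp_rw [hkernel]
  exact LinearMap.congr_fun hzero
    ⟨_, memH2_szegoKernel (q := starRingEnd ℂ p) (by simpa using hp)⟩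

theorem hasEigenvector_rayMellin (hp : 0 < p.re) (hs : s.re ∈ Ioo 0 (1 / 2)) {a : ℝ} (ha : 0 < a)
    {b : ℂ} (hb : 0 ≤ b.re) (hfix : a * p + b = p) :
    Module.End.HasEigenvector (compAffine ha hb).dualMap ((a : ℂ) ^ (-s)) (rayMellin hp hs) :=
  ⟨Module.End.mem_eigenspace_iff.2 <| LinearMap.ext (rayMellin_compAffine hp hs ha hb hfix),
    rayMellin_ne_zero hp hs⟩

theorem linearIndependent_rayMellin {p s t : ℂ} (hp : 0 < p.re) (hs : s.re ∈ Ioo 0 (1 / 2))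
    (ht : t.re ∈ Ioo 0 (1 / 2)) {r : ℝ} (hr : r ∈ Ioc 0 1) (hst : (r : ℂ) ^ (-s) ≠ (r : ℂ) ^ (-t)) :
    LinearIndependent ℂ ![rayMellin hp hs, rayMellin hp ht] := by
  have hb : 0 ≤ ((1 - r : ℝ) * p : ℂ).re := by
    rw [re_ofReal_mul]
    exact mul_nonneg (sub_nonneg.2 hr.2) hp.le
  have hfix : r * p + (1 - r : ℝ) * p = p := by
    push_cast
    ring
  refine Module.End.eigenvectors_linearIndependent' (compAffine hr.1 hb).dualMap
    ![(r : ℂ) ^ (-s), (r : ℂ) ^ (-t)] (injective_pair_iff_ne.2 hst) _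
    (Fin.forall_fin_two.2 ⟨?_, ?_⟩)
  · exact hasEigenvector_rayMellin hp hs hr.1 hb hfix
  · exact hasEigenvector_rayMellin hp ht hr.1 hb hfix

theorem not_dense_span_orbit_compAffine {a : ℝ} (ha : a ∈ Ioo 0 1) {b : ℂ} (hb : 0 < b.re)
    (f : HardySpace) :
    ¬ Dense (Submodule.span ℂ (range fun n : ℕ => (compAffine ha.1 hb.le ^ n) f) :
      Set HardySpace) := by
  have ha' : 0 < 1 - a := sub_pos.2 ha.2
  obtain ⟨s, t, hs, ht, hst, hsqrt⟩ := exists_cpow_neg_eq_and_sqrt_cpow_neg_ne ha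
  have hp : 0 < (b / (1 - a : ℝ)).re := by
    rw [div_ofReal_re]
    exact div_pos hb ha'
  have hfix : a * (b / (1 - a : ℝ)) + b = b / (1 - a : ℝ) := by
    have hne : ((1 - a : ℝ) : ℂ) ≠ 0 := ofReal_ne_zero.2 ha'.ne'
    field_simp
    push_cast
    ring
  refine not_dense_span_orbit (continuous_rayMellin hp hs) (continuous_rayMellin hp ht)
    (hasEigenvector_rayMellin hp hs ha.1 hb.le hfix) ?_
    (linearIndependent_rayMellin hp hs ht (r := √a)
      ⟨Real.sqrt_pos.2 ha.1, Real.sqrt_le_one.2 ha.2.le⟩ hsqrt) f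
  rw [hst]
  exact hasEigenvector_rayMellin hp ht ha.1 hb.le hfix

end HardySpace

end RayMellin

end

/-- Type I hyperbolic non-automorphisms induce non-cyclic composition operators:
no `f ∈ H²(ℂ₊)` has orbit under `C_φ` with dense linear span. -/
theorem typeI_not_cyclic (a : ℝ) (ha0 : 0 < a) (ha1 : a < 1) (b : ℂ) (hb : 0 < b.re)
    (φ : ℂ → ℂ) (hφ : ∀ w, φ w = (a : ℂ) * w + b)
    (f : ℂ → ℂ) (hf : MemH2 f) :
    ∃ g : ℂ → ℂ, MemH2 g ∧ ∃ ε : ℝ, 0 < ε ∧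
      ∀ h ∈ Submodule.span ℂ (Set.range fun n : ℕ => f ∘ φ^[n]),
        ENNReal.ofReal ε ^ 2 ≤ H2normSq (g - h) := by
  obtain rfl : φ = fun w => (a : ℂ) * w + b := funext hφ
  let F : HardySpace := ⟨f, hf⟩
  let S := Submodule.span ℂ (Set.range fun n : ℕ => (HardySpace.compAffine ha0 hb.le ^ n) F)
  obtain ⟨g, hg⟩ : ∃ g : HardySpace, g ∉ closure (S : Set HardySpace) := by
    simpa [Dense] using HardySpace.not_dense_span_orbit_compAffine ⟨ha0, ha1⟩ hb F
  obtain ⟨ε, hε, hdist⟩ : ∃ ε > 0, ∀ h ∈ S, ε ≤ dist g h := by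
    simpa [Metric.mem_closure_iff] using hg
  refine ⟨g, g.2, ε, hε, fun h hh => ?_⟩
  obtain ⟨k, hk, rfl⟩ := (HardySpace.map_toFunLinear_span_orbit ha0 hb.le F).ge hh
  calc ENNReal.ofReal ε ^ 2 ≤ ENNReal.ofReal ‖g - k‖ ^ 2 := by
        gcongr
        exact (hdist k hk).trans_eq (dist_eq_norm g k)
    _ = H2normSq (g - HardySpace.toFunLinear k) := by
        rw [HardySpace.ofReal_norm_eq, H2norm_sq]
        rfl
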